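/- Let U and V be minimal representations such that for every valuation σ the maximum of ⟦u⟧σ over u ∈ U equals the maximum of ⟦v⟧σ over v ∈ V. Then for every finite set E, variable x and S ∈ ℕ, the sublevel A(E, x, S) belongs to U if and only if it belongs to V. -/

import Mathlib

/-- The impredicative maximum on natural numbers. -/
def imaxN : ℕ → ℕ → ℕ
  | _, 0 => 0
  | i, (j+1) => max i (j+1)

/-- Sublevels A(E,x,S) and B(E,S). -/
inductive SubLvl where
  | A : Finset ℕ → ℕ → ℕ → SubLvl
  | B : Finset ℕ → ℕ → SubLvl
deriving DecidableEq

/-- Value of a sublevel under a valuation. -/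
def evalS (σ : ℕ → ℕ) : SubLvl → ℕ
  | .A E x S => if ∃ y ∈ E, σ y = 0 then 0 else σ x + S
  | .B E S => if ∃ y ∈ E, σ y = 0 then 0 else S

/-- Wellformed sublevels. -/
def Wf : SubLvl → Prop
  | .A E x _ => x ∈ E
  | .B _ S => 0 < S

/-- Semantic comparison of sublevels. -/
def leT (u v : SubLvl) : Prop := ∀ σ : ℕ → ℕ, evalS σ u ≤ evalS σ v

/-- A minimal representation: a finite set of wellformed, pairwise
incomparable sublevels. -/
def MinRep (U : Finset SubLvl) : Prop :=
  (∀ u ∈ U, Wf u) ∧ ∀ u ∈ U, ∀ v ∈ U, u ≠ v → ¬ leT u v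


def szS : SubLvl → ℕ
  | .A _ _ T => T
  | .B _ T => T

theorem exists_dom (U V : Finset SubLvl) (hU : MinRep U) (hV : MinRep V)
    (h : ∀ σ : ℕ → ℕ, U.sup (evalS σ) = V.sup (evalS σ))
    (E : Finset ℕ) (x S : ℕ) (hm : SubLvl.A E x S ∈ U) :
    ∃ F T, SubLvl.A F x T ∈ V ∧ F ⊆ E ∧ S ≤ T := by
  have hx : x ∈ E := hU.1 _ hm
  let M := V.sup szS + 2
  let σ : ℕ → ℕ := fun y => if y = x then M else if y ∈ E then 1 else 0
  have hσ0 : ∀ y, σ y = 0 → y ∉ E := by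
    intro y hy hyE
    simp only [σ, M] at hy
    split_ifs at hy
  have hσ1 : ∀ y, σ y ≠ 0 → y ∈ E := by
    intro y hy
    by_contra hyE
    have : y ≠ x := fun e => hyE (e ▸ hx)
    exact hy (by simp [σ, this, hyE])
  have hσx : σ x = M := by simp [σ]
  have he : evalS σ (SubLvl.A E x S) = M + S := by
    have : ¬ ∃ y ∈ E, σ y = 0 := fun ⟨y, hy, h0⟩ => hσ0 y h0 hy
    simp only [evalS, if_neg this, hσx]
  have h1 : M + S ≤ V.sup (evalS σ) := by
    rw [← h σ, ← he]
    exact Finset.le_sup (f := evalS σ) hm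
  have hpos : (⊥ : ℕ) < M + S := by simp only [bot_eq_zero', M]; omega
  obtain ⟨v, hv, hle⟩ := (Finset.le_sup_iff hpos).1 h1
  have hsz : szS v + 2 ≤ M := Nat.add_le_add_right (Finset.le_sup (f := szS) hv) 2
  cases v with
  | B F T =>
    simp only [evalS, szS] at hle hsz
    split_ifs at hle <;> omega
  | A F z T =>
    simp only [evalS, szS] at hle hsz
    split_ifs at hle with hc
    · omega
    · have hzx : z = x := by
        by_contra hne
        have : σ z ≤ 1 := by
          simp only [σ, if_neg hne]
          split_ifs <;> omega
        omega
      subst hzx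
      refine ⟨F, T, hv, fun y hy => hσ1 y fun h0 => hc ⟨y, hy, h0⟩, by omega⟩

theorem leT_A {E F : Finset ℕ} {x S T : ℕ} (hF : F ⊆ E) (hS : S ≤ T) :
    leT (.A E x S) (.A F x T) := by
  intro σ
  simp only [evalS]
  split_ifs with h1 h2 h2
  · exact le_rfl
  · exact Nat.zero_le _
  · obtain ⟨y, hy, h0⟩ := h2
    exact absurd ⟨y, hF hy, h0⟩ h1
  · omega

theorem same_A_aux (U V : Finset SubLvl) (hU : MinRep U) (hV : MinRep V)
    (h : ∀ σ : ℕ → ℕ, U.sup (evalS σ) = V.sup (evalS σ))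
    (E : Finset ℕ) (x S : ℕ) (hm : SubLvl.A E x S ∈ U) : SubLvl.A E x S ∈ V := by
  obtain ⟨F, T, hv, hFE, hST⟩ := exists_dom U V hU hV h E x S hm
  obtain ⟨G, R, hu, hGF, hTR⟩ := exists_dom V U hV hU (fun σ => (h σ).symm) F x T hv
  by_cases he : SubLvl.A E x S = SubLvl.A G x R
  · injection he with e1 e2 e3
    subst e1 e3
    have e4 : F = E := Finset.Subset.antisymm hFE hGF
    have e5 : T = S := by omega
    rw [e4, e5] at hv
    exact hv
  · exact absurd (leT_A (hGF.trans hFE) (hST.trans hTR)) (hU.2 _ hm _ hu he)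

theorem minrep_same_A (U V : Finset SubLvl) (hU : MinRep U) (hV : MinRep V)
    (h : ∀ σ : ℕ → ℕ, U.sup (evalS σ) = V.sup (evalS σ)) :
    ∀ (E : Finset ℕ) (x S : ℕ), SubLvl.A E x S ∈ U ↔ SubLvl.A E x S ∈ V :=
  fun E x S => ⟨same_A_aux U V hU hV h E x S,
    same_A_aux V U hV hU (fun σ => (h σ).symm) E x S⟩
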